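/- Let d ≥ 2, let p be a symmetric probability mass function on ℤ with ψ(s) := Σ_{j∈ℤ} e^{sj} p(j) < ∞ for all s ∈ (−R, R), R > 0, and let H be the almost-sure limit of the spherical averages H_r of the free height field with increment law p on the rooted Cayley tree of order d. Let κ_n denote the n-th cumulant of a single increment (with law p) and κ_n^T the n-th cumulant of H. Then κ_1^T = 0, and for every n ≥ 2, κ_n^T = κ_n · d^{n−1} / ( (d^{n−1} − 1)(d+1)^{n−1} ). -/

import Mathlib

open MeasureTheory ProbabilityTheory Filter Finset Topology

noncomputable section

/-- A non-root vertex of the rooted Cayley tree of order `d`: the first step from the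
root is one of `d+1` children, every further step one of `d` children. -/
abbrev Vertex (d : ℕ) : Type := Fin (d + 1) × List (Fin d)

/-- depth of a non-root vertex -/
def vdepth {d : ℕ} (v : Vertex d) : ℕ := v.2.length + 1

/-- the sphere `W_r` of radius `r ≥ 1`: all vertices of depth `r` -/
def sphereW (d r : ℕ) : Finset (Vertex d) :=
  (Finset.univ : Finset (Fin (d + 1) × (Fin (r - 1) → Fin d))).image
    (fun x => (x.1, List.ofFn x.2))

/-- height at `v`: sum of the increments along the path from the root to `v`
(the prefixes of length `0,…,|v.2|` of the step list of `v` enumerate that path). -/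
def heightAt {d : ℕ} {Ω : Type*} (Y : Vertex d → Ω → ℝ) (v : Vertex d) (ω : Ω) : ℝ :=
  ∑ k ∈ Finset.range (v.2.length + 1), Y (v.1, v.2.take k) ω

/-- spherical average `H_r` of the heights at depth `r` -/
def sphAvg (d : ℕ) {Ω : Type*} (Y : Vertex d → Ω → ℝ) (r : ℕ) (ω : Ω) : ℝ :=
  (((d + 1) * d ^ (r - 1) : ℕ) : ℝ)⁻¹ * ∑ v ∈ sphereW d r, heightAt Y v ω

/-- Rescaling the argument multiplies the `n`-th derivative by the `n`-th power of the factor;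
no smoothness is required. -/
lemma iteratedDeriv_comp_const_mul_real (f : ℝ → ℝ) (c : ℝ) (n : ℕ) :
    iteratedDeriv n (fun x => f (c * x)) = fun x => c ^ n * iteratedDeriv n f (c * x) := by
  induction n with
  | zero => simp
  | succ n ih =>
    ext x
    rw [iteratedDeriv_succ, ih, deriv_const_mul_field, iteratedDeriv_succ]
    have h := deriv_comp_mul_left c (iteratedDeriv n f) x
    rw [h, smul_eq_mul]
    ring

lemma AnalyticAt.exists_le_mul_sq {f : ℝ → ℝ} (hf : AnalyticAt ℝ f 0) (h0 : f 0 = 0)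
    (h1 : deriv f 0 = 0) :
    ∃ C > 0, ∃ δ > 0, ∀ s : ℝ, |s| < δ → f s ≤ C * s ^ 2 := by
  obtain ⟨q, hq⟩ := hf
  have hO := hq.isBigO_sub_partialSum_pow 2
  obtain ⟨C, hC, hb⟩ := hO.exists_pos
  have hb' := hb.bound
  obtain ⟨δ, hδ, hball⟩ := Metric.eventually_nhds_iff.1 hb'
  refine ⟨C, hC, δ, hδ, fun s hs => ?_⟩
  have h := hball (y := s) (by simpa using hs)
  have hq0 : q 0 (fun _ => s) = 0 := by
    rw [hq.coeff_zero, h0]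
  have hq1 : q 1 (fun _ => s) = 0 := by
    have h2 := hq.deriv
    rw [h1] at h2
    have h3 := (q 1).map_smul_univ (fun _ => s) (fun _ => (1 : ℝ))
    simp only [smul_eq_mul, mul_one] at h3
    rw [h3, ← h2]
    simp
  have hps : q.partialSum 2 s = 0 := by
    simp only [FormalMultilinearSeries.partialSum, Finset.sum_range_succ, Finset.sum_range_zero,
      hq0, hq1, add_zero]
  rw [hps] at h
  simp only [zero_add, sub_zero, Real.norm_eq_abs, abs_pow, sq_abs] at h
  exact (le_abs_self _).trans h

section VitaliConvergence

variable {Ω : Type*} [MeasurableSpace Ω] {P : Measure Ω}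

lemma integrable_and_integral_le_of_tendsto_ae {Z : ℕ → Ω → ℝ} {W : Ω → ℝ} {C : ℝ}
    (h0 : ∀ r ω, 0 ≤ Z r ω) (hint : ∀ r, Integrable (Z r) P) (hC : ∀ r, ∫ ω, Z r ω ∂P ≤ C)
    (hlim : ∀ᵐ ω ∂P, Tendsto (fun r => Z r ω) atTop (𝓝 (W ω))) :
    Integrable W P ∧ ∫ ω, W ω ∂P ≤ C := by
  have hC0 : 0 ≤ C := (integral_nonneg (h0 0)).trans (hC 0)
  have hW0 : 0 ≤ᵐ[P] W := by
    filter_upwards [hlim] with ω hω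
    exact ge_of_tendsto' hω fun r => h0 r ω
  have hWm : AEStronglyMeasurable W P :=
    aestronglyMeasurable_of_tendsto_ae _ (fun r => (hint r).aestronglyMeasurable) hlim
  have hle : ∫⁻ ω, ENNReal.ofReal (W ω) ∂P ≤ ENNReal.ofReal C := by
    have heq : ∫⁻ ω, ENNReal.ofReal (W ω) ∂P
        = ∫⁻ ω, liminf (fun r => ENNReal.ofReal (Z r ω)) atTop ∂P := by
      refine lintegral_congr_ae ?_
      filter_upwards [hlim] with ω hω
      exact ((ENNReal.continuous_ofReal.tendsto _).comp hω).liminf_eq.symm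
    rw [heq]
    refine (lintegral_liminf_le' fun r => (hint r).aemeasurable.ennreal_ofReal).trans ?_
    refine liminf_le_of_frequently_le' (Frequently.of_forall fun r => ?_)
    rw [← ofReal_integral_eq_lintegral_ofReal (hint r) (Eventually.of_forall (h0 r))]
    exact ENNReal.ofReal_le_ofReal (hC r)
  refine ⟨⟨hWm, ?_⟩, ?_⟩
  · rw [hasFiniteIntegral_iff_ofReal hW0]
    exact hle.trans_lt ENNReal.ofReal_lt_top
  · rw [integral_eq_lintegral_of_nonneg_ae hW0 hWm]
    exact ENNReal.toReal_le_of_le_ofReal hC0 hle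

lemma abs_integral_sub_integral_min_le [IsFiniteMeasure P] {Z : Ω → ℝ} {C N : ℝ} (hN : 0 < N)
    (hint : Integrable Z P) (hint2 : Integrable (fun ω => Z ω ^ 2) P)
    (hC : ∫ ω, Z ω ^ 2 ∂P ≤ C) :
    |∫ ω, Z ω ∂P - ∫ ω, min (Z ω) N ∂P| ≤ C / N := by
  have hmin : Integrable (fun ω => min (Z ω) N) P := hint.inf (integrable_const N)
  rw [← integral_sub hint hmin, abs_of_nonneg
    (integral_nonneg fun ω => sub_nonneg.2 (min_le_left _ _))]
  calc ∫ ω, (Z ω - min (Z ω) N) ∂P ≤ ∫ ω, Z ω ^ 2 / N ∂P := by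
        refine integral_mono (hint.sub hmin) (hint2.div_const N) fun ω => ?_
        beta_reduce
        rw [le_div_iff₀ hN]
        rcases le_total (Z ω) N with h | h
        · rw [min_eq_left h]
          nlinarith [sq_nonneg (Z ω)]
        · rw [min_eq_right h]
          nlinarith [sq_nonneg (Z ω), sq_nonneg N]
    _ ≤ C / N := by
        rw [integral_div]
        gcongr

/-- Almost sure convergence together with a uniform second moment bound gives convergence of
the integrals of nonnegative functions. -/
lemma tendsto_integral_of_sq_bounded [IsFiniteMeasure P] {Z : ℕ → Ω → ℝ} {W : Ω → ℝ} {C : ℝ}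
    (h0 : ∀ r ω, 0 ≤ Z r ω) (hint : ∀ r, Integrable (Z r) P)
    (hint2 : ∀ r, Integrable (fun ω => Z r ω ^ 2) P) (hC : ∀ r, ∫ ω, Z r ω ^ 2 ∂P ≤ C)
    (hlim : ∀ᵐ ω ∂P, Tendsto (fun r => Z r ω) atTop (𝓝 (W ω))) :
    Integrable W P ∧ Tendsto (fun r => ∫ ω, Z r ω ∂P) atTop (𝓝 (∫ ω, W ω ∂P)) := by
  have hC0 : 0 ≤ C := (integral_nonneg fun ω => sq_nonneg (Z 0 ω)).trans (hC 0)
  obtain ⟨hW2, hWC⟩ := integrable_and_integral_le_of_tendsto_ae (W := fun ω => W ω ^ 2)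
    (fun r ω => sq_nonneg (Z r ω)) hint2 hC
    (by filter_upwards [hlim] with ω hω using hω.pow 2)
  have hWm : AEStronglyMeasurable W P :=
    aestronglyMeasurable_of_tendsto_ae _ (fun r => (hint r).aestronglyMeasurable) hlim
  have hW : Integrable W P :=
    ((memLp_two_iff_integrable_sq hWm).2 hW2).integrable one_le_two
  refine ⟨hW, Metric.tendsto_atTop.2 fun ε hε => ?_⟩
  obtain ⟨N, hN, hCN⟩ : ∃ N : ℝ, 0 < N ∧ C / N < ε / 3 := by
    refine ⟨3 * (C + 1) / ε, by positivity, ?_⟩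
    rw [div_div_eq_mul_div, div_lt_div_iff₀ (by positivity) (by positivity)]
    nlinarith
  have htr : Tendsto (fun r => ∫ ω, min (Z r ω) N ∂P) atTop (𝓝 (∫ ω, min (W ω) N ∂P)) := by
    refine tendsto_integral_of_dominated_convergence (fun _ => N)
      (fun r => ((hint r).inf (integrable_const N)).aestronglyMeasurable) (integrable_const N)
      (fun r => Eventually.of_forall fun ω => ?_) ?_
    · rw [Real.norm_of_nonneg (le_min (h0 r ω) hN.le)]
      exact min_le_right _ _
    · filter_upwards [hlim] with ω hω using hω.min tendsto_const_nhds
  obtain ⟨n₀, hn₀⟩ := Metric.tendsto_atTop.1 htr (ε / 3) (by positivity)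
  refine ⟨n₀, fun r hr => ?_⟩
  have h1 := abs_integral_sub_integral_min_le hN (hint r) (hint2 r) (hC r)
  have h2 := abs_integral_sub_integral_min_le hN hW hW2 hWC
  have h3 := hn₀ r hr
  rw [Real.dist_eq] at h3 ⊢
  rw [abs_le] at h1 h2
  rw [abs_lt] at h3 ⊢
  constructor <;> linarith [h1.1, h1.2, h2.1, h2.2, h3.1, h3.2]

end VitaliConvergence

section Tree

variable {d : ℕ}

lemma sum_sphereW_succ (r : ℕ) (f : Vertex d → ℝ) :
    ∑ v ∈ sphereW d (r + 1), f v
      = ∑ x : Fin (d + 1) × (Fin r → Fin d), f (x.1, List.ofFn x.2) := by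
  rw [sphereW, Finset.sum_image]
  · rfl
  · rintro ⟨i, a⟩ - ⟨j, b⟩ - h
    simp only [Prod.mk.injEq] at h
    exact Prod.ext h.1 (List.ofFn_injective h.2)

lemma length_of_mem_sphereW_succ {r : ℕ} {v : Vertex d} (hv : v ∈ sphereW d (r + 1)) :
    v.2.length = r := by
  simp only [sphereW, Finset.mem_image, Finset.mem_univ, true_and] at hv
  obtain ⟨x, rfl⟩ := hv
  simp

lemma card_sphereW_succ (r : ℕ) : (sphereW d (r + 1)).card = (d + 1) * d ^ r := by
  have h := sum_sphereW_succ (d := d) r (fun _ => 1)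
  simp only [Finset.sum_const, nsmul_eq_mul, mul_one, Finset.card_univ, Fintype.card_prod,
    Fintype.card_fin, Fintype.card_fun] at h
  exact_mod_cast h

lemma heightAt_append_singleton {Ω : Type*} (Y : Vertex d → Ω → ℝ) (i : Fin (d + 1))
    (l : List (Fin d)) (x : Fin d) (ω : Ω) :
    heightAt Y (i, l ++ [x]) ω = heightAt Y (i, l) ω + Y (i, l ++ [x]) ω := by
  simp only [heightAt, List.length_append, List.length_singleton]
  rw [Finset.sum_range_succ]
  congr 1
  · refine Finset.sum_congr rfl fun k hk => ?_
    rw [List.take_append_of_le_length (by simpa [Nat.lt_succ_iff] using hk)]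
  · rw [List.take_of_length_le (by simp)]

lemma sum_sphereW_succ_succ (r : ℕ) (f : Vertex d → ℝ) :
    ∑ v ∈ sphereW d (r + 2), f v
      = ∑ v ∈ sphereW d (r + 1), ∑ x : Fin d, f (v.1, v.2 ++ [x]) := by
  rw [sum_sphereW_succ, sum_sphereW_succ, Fintype.sum_prod_type, Fintype.sum_prod_type]
  refine Finset.sum_congr rfl fun i _ => ?_
  rw [← (Fin.snocEquiv fun _ => Fin d).sum_comp, Fintype.sum_prod_type_right]
  refine Finset.sum_congr rfl fun a _ => Finset.sum_congr rfl fun x _ => ?_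
  rw [List.ofFn_succ']
  simp [Fin.snocEquiv]

lemma sum_heightAt_succ {Ω : Type*} (Y : Vertex d → Ω → ℝ) (r : ℕ) (ω : Ω) :
    ∑ v ∈ sphereW d (r + 2), heightAt Y v ω
      = d * ∑ v ∈ sphereW d (r + 1), heightAt Y v ω + ∑ v ∈ sphereW d (r + 2), Y v ω := by
  rw [sum_sphereW_succ_succ, sum_sphereW_succ_succ r fun v => Y v ω, Finset.mul_sum,
    ← Finset.sum_add_distrib]
  refine Finset.sum_congr rfl fun v _ => ?_
  simp [heightAt_append_singleton, Finset.sum_add_distrib]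

/-- The set of non-root vertices of depth at most `r + 1`. -/
def ballW (d r : ℕ) : Finset (Vertex d) :=
  (Finset.range (r + 1)).biUnion fun k => sphereW d (k + 1)

lemma pairwiseDisjoint_sphereW (s : Set ℕ) :
    s.PairwiseDisjoint fun k => sphereW d (k + 1) := by
  intro k _ l _ hkl
  refine Finset.disjoint_left.2 fun v hv hv' => hkl ?_
  rw [← length_of_mem_sphereW_succ hv, length_of_mem_sphereW_succ hv']

/-- The inverse of the size of the sphere containing `v`: the weight of the increment at `v` in
the spherical averages. -/
def vertexWeight (v : Vertex d) : ℝ := (((d : ℝ) + 1) * (d : ℝ) ^ v.2.length)⁻¹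

lemma sphAvg_succ_eq_sum (hd : 0 < d) {Ω : Type*} (Y : Vertex d → Ω → ℝ) (r : ℕ) (ω : Ω) :
    sphAvg d Y (r + 1) ω = ∑ v ∈ ballW d r, vertexWeight v * Y v ω := by
  have hd' : (d : ℝ) ≠ 0 := by positivity
  rw [ballW, Finset.sum_biUnion (pairwiseDisjoint_sphereW _)]
  have hk : ∀ k, ∑ v ∈ sphereW d (k + 1), vertexWeight v * Y v ω
      = (((d : ℝ) + 1) * (d : ℝ) ^ k)⁻¹ * ∑ v ∈ sphereW d (k + 1), Y v ω := by
    intro k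
    rw [Finset.mul_sum]
    refine Finset.sum_congr rfl fun v hv => ?_
    rw [vertexWeight, length_of_mem_sphereW_succ hv]
  simp only [hk]
  induction r with
  | zero =>
    simp only [sphAvg, zero_add, Finset.sum_range_one]
    rw [sum_sphereW_succ 0, sum_sphereW_succ 0]
    simp [heightAt]
  | succ r ih =>
    rw [Finset.sum_range_succ, ← ih, sphAvg, sphAvg, sum_heightAt_succ]
    simp only [Nat.add_sub_cancel]
    push_cast
    rw [mul_add]
    congr 1
    have : (d : ℝ) + 1 ≠ 0 := by positivity
    field_simp
    ring

lemma prod_ballW (r : ℕ) (f : ℝ → ℝ) :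
    ∏ v ∈ ballW d r, f (vertexWeight v)
      = ∏ k ∈ Finset.range (r + 1),
          f ((((d : ℝ) + 1) * (d : ℝ) ^ k)⁻¹) ^ ((d + 1) * d ^ k) := by
  rw [ballW, Finset.prod_biUnion (pairwiseDisjoint_sphereW _)]
  refine Finset.prod_congr rfl fun k _ => ?_
  rw [← card_sphereW_succ]
  refine Finset.prod_eq_pow_card fun v hv => ?_
  rw [vertexWeight, length_of_mem_sphereW_succ hv]

lemma vertexWeight_pos (hd : 0 < d) (v : Vertex d) : 0 < vertexWeight v := by
  unfold vertexWeight
  positivity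

lemma vertexWeight_le_one (hd : 0 < d) (v : Vertex d) : vertexWeight v ≤ 1 := by
  refine inv_le_one_of_one_le₀ ?_
  have h1 : (1 : ℝ) ≤ d := by exact_mod_cast hd
  have h2 : (1 : ℝ) ≤ (d : ℝ) ^ v.2.length := one_le_pow₀ h1
  nlinarith

end Tree

section Law

variable {Ω : Type*} [MeasurableSpace Ω] {P : Measure Ω} {p : ℤ → ℝ}

lemma integrable_exp_and_mgf_eq_tsum (hp0 : ∀ j, 0 ≤ p j) {Y : Ω → ℤ} (hY : Measurable Y)
    (hlaw : ∀ j : ℤ, P {ω | Y ω = j} = ENNReal.ofReal (p j)) {s : ℝ}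
    (hs : Summable fun j : ℤ => Real.exp (s * j) * p j) :
    Integrable (fun ω => Real.exp (s * (Y ω : ℝ))) P ∧
      mgf (fun ω => (Y ω : ℝ)) P s = ∑' j : ℤ, Real.exp (s * j) * p j := by
  have hmass : ∀ j : ℤ, P.map Y {j} = ENNReal.ofReal (p j) := fun j => by
    rw [Measure.map_apply hY (measurableSet_singleton j)]
    exact hlaw j
  have hint : Integrable (fun j : ℤ => Real.exp (s * j)) (P.map Y) := by
    rw [← Measure.sum_smul_dirac (P.map Y)]
    refine integrable_sum_dirac (fun j => by simp [hmass]) ?_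
    refine hs.congr fun j => ?_
    rw [hmass, ENNReal.toReal_ofReal (hp0 j), Real.norm_of_nonneg (Real.exp_nonneg _), mul_comm]
  refine ⟨(integrable_map_measure hint.aestronglyMeasurable hY.aemeasurable).1 hint, ?_⟩
  rw [mgf, ← integral_map (f := fun j : ℤ => Real.exp (s * j)) hY.aemeasurable
    hint.aestronglyMeasurable, integral_countable hint]
  refine tsum_congr fun j => ?_
  rw [measureReal_def, hmass, ENNReal.toReal_ofReal (hp0 j), smul_eq_mul, mul_comm]

lemma tsum_exp_neg_mul (hsymm : ∀ j, p (-j) = p j) (s : ℝ) :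
    ∑' j : ℤ, Real.exp (-s * j) * p j = ∑' j : ℤ, Real.exp (s * j) * p j := by
  rw [← (Equiv.neg ℤ).tsum_eq]
  simp [hsymm]

end Law

lemma deriv_zero_of_even {f : ℝ → ℝ} (hf : ∀ s, f (-s) = f s) : deriv f 0 = 0 := by
  have h := deriv_comp_neg f 0
  simp only [hf, neg_zero] at h
  linarith

/-- The moment generating function of the spherical average at depth `r + 1`, expressed through
the moment generating function `ψ` of a single increment. -/
def sphereMgf (d : ℕ) (ψ : ℝ → ℝ) (r : ℕ) (t : ℝ) : ℝ :=
  ∏ k ∈ Finset.range (r + 1), ψ ((((d : ℝ) + 1) * (d : ℝ) ^ k)⁻¹ * t) ^ ((d + 1) * d ^ k)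

lemma sphereMgf_succ (d : ℕ) (ψ : ℝ → ℝ) (r : ℕ) (t : ℝ) :
    sphereMgf d ψ (r + 1) t
      = ψ (((d : ℝ) + 1)⁻¹ * t) ^ (d + 1) * sphereMgf d ψ r ((d : ℝ)⁻¹ * t) ^ d := by
  rw [sphereMgf, Finset.prod_range_succ', mul_comm, sphereMgf, ← Finset.prod_pow]
  congr 1
  · simp
  · refine Finset.prod_congr rfl fun k _ => ?_
    rw [← pow_mul]
    congr 1
    · rw [pow_succ, ← mul_assoc, ← mul_assoc, mul_inv (((d : ℝ) + 1) * (d : ℝ) ^ k)]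
    · ring

lemma sphereMgf_even {d : ℕ} {ψ : ℝ → ℝ} (hψ : ∀ s, ψ (-s) = ψ s) (r : ℕ) (t : ℝ) :
    sphereMgf d ψ r (-t) = sphereMgf d ψ r t := by
  simp [sphereMgf, hψ]

lemma sphereMgf_le {d : ℕ} (hd : 2 ≤ d) {ψ : ℝ → ℝ} {C δ : ℝ} (hC : 0 < C)
    (h0 : ∀ s, 0 ≤ ψ s) (hle : ∀ s, |s| < δ → ψ s ≤ Real.exp (C * s ^ 2)) (r : ℕ) {t : ℝ}
    (ht : |t| < δ) :
    sphereMgf d ψ r t ≤ Real.exp (2 * C * t ^ 2) := by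
  have hd2 : (2 : ℝ) ≤ d := by exact_mod_cast hd
  have hw : ∀ k : ℕ, (((d : ℝ) + 1) * (d : ℝ) ^ k)⁻¹ ≤ (1 / 2) ^ k := fun k => by
    rw [one_div, inv_pow]
    refine inv_anti₀ (by positivity) ?_
    have h1 : (2 : ℝ) ^ k ≤ (d : ℝ) ^ k := pow_le_pow_left₀ zero_le_two hd2 k
    have h2 : (0 : ℝ) < (d : ℝ) ^ k := by positivity
    nlinarith
  calc sphereMgf d ψ r t
      ≤ ∏ k ∈ Finset.range (r + 1), Real.exp (C * t ^ 2 * (1 / 2) ^ k) := by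
        refine Finset.prod_le_prod (fun k _ => pow_nonneg (h0 _) _) fun k _ => ?_
        have hpos : 0 < ((d : ℝ) + 1) * (d : ℝ) ^ k := by positivity
        have habs : |(((d : ℝ) + 1) * (d : ℝ) ^ k)⁻¹ * t| < δ := by
          rw [abs_mul, abs_of_pos (inv_pos.2 hpos)]
          have h1 : (((d : ℝ) + 1) * (d : ℝ) ^ k)⁻¹ ≤ 1 :=
            (hw k).trans (pow_le_one₀ (by norm_num) (by norm_num))
          exact (mul_le_of_le_one_left (abs_nonneg t) h1).trans_lt ht
        refine (pow_le_pow_left₀ (h0 _) (hle _ habs) _).trans ?_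
        rw [← Real.exp_nat_mul, Real.exp_le_exp]
        push_cast
        calc ((d : ℝ) + 1) * (d : ℝ) ^ k * (C * ((((d : ℝ) + 1) * (d : ℝ) ^ k)⁻¹ * t) ^ 2)
            = C * t ^ 2 * (((d : ℝ) + 1) * (d : ℝ) ^ k)⁻¹ := by field_simp
          _ ≤ C * t ^ 2 * (1 / 2) ^ k := by
              gcongr
              exact hw k
    _ ≤ Real.exp (2 * C * t ^ 2) := by
        rw [← Real.exp_sum, Real.exp_le_exp, ← Finset.mul_sum]
        have h := sum_geometric_two_le (r + 1)
        nlinarith [mul_nonneg hC.le (sq_nonneg t)]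

lemma integrable_exp_sphAvg_and_mgf_eq {Ω : Type*} [MeasurableSpace Ω] {P : Measure Ω}
    [IsProbabilityMeasure P] {d : ℕ} (hd : 0 < d) {X : Vertex d → Ω → ℝ}
    (hmeas : ∀ v, Measurable (X v)) (hindep : iIndepFun X P) {ψ : ℝ → ℝ} {R : ℝ}
    (hψ : ∀ v s, |s| < R → Integrable (fun ω => Real.exp (s * X v ω)) P ∧ mgf (X v) P s = ψ s)
    (r : ℕ) {t : ℝ} (ht : |t| < R) :
    Integrable (fun ω => Real.exp (t * sphAvg d X (r + 1) ω)) P ∧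
      mgf (sphAvg d X (r + 1)) P t = sphereMgf d ψ r t := by
  have heq : sphAvg d X (r + 1) = ∑ v ∈ ballW d r, fun ω => vertexWeight v * X v ω := by
    ext ω
    rw [sphAvg_succ_eq_sum hd, Finset.sum_apply]
  have hindep' : iIndepFun (fun v ω => vertexWeight v * X v ω) P :=
    hindep.comp (fun v x => vertexWeight v * x) fun v => measurable_const_mul _
  have hmeas' : ∀ v, Measurable fun ω => vertexWeight v * X v ω :=
    fun v => (hmeas v).const_mul _
  have habs : ∀ v : Vertex d, |vertexWeight v * t| < R := fun v => by
    rw [abs_mul, abs_of_pos (vertexWeight_pos hd v)]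
    exact (mul_le_of_le_one_left (abs_nonneg t) (vertexWeight_le_one hd v)).trans_lt ht
  constructor
  · rw [heq]
    refine hindep'.integrable_exp_mul_sum hmeas' fun v _ => ?_
    have h := (hψ v _ (habs v)).1
    convert h using 3
    ring
  · rw [heq, hindep'.mgf_sum hmeas', sphereMgf, ← prod_ballW r fun c => ψ (c * t)]
    refine Finset.prod_congr rfl fun v _ => ?_
    rw [mgf_const_mul, (hψ v _ (habs v)).2]

lemma iteratedDeriv_eq_of_functional_equation {d : ℕ} (hd : 2 ≤ d) {G K : ℝ → ℝ}
    (hG : AnalyticAt ℝ G 0) (hK : AnalyticAt ℝ K 0)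
    (hfun : ∀ᶠ t in 𝓝 0,
      G t = ((d : ℝ) + 1) * K (((d : ℝ) + 1)⁻¹ * t) + d * G ((d : ℝ)⁻¹ * t))
    {n : ℕ} (hn : 2 ≤ n) :
    iteratedDeriv n G 0 = iteratedDeriv n K 0 *
      (d : ℝ) ^ (n - 1) / (((d : ℝ) ^ (n - 1) - 1) * ((d : ℝ) + 1) ^ (n - 1)) := by
  have hscale : ∀ {f : ℝ → ℝ} (a c : ℝ), AnalyticAt ℝ f 0 →
      ContDiffAt ℝ n (fun t => a * f (c * t)) 0 := fun {f} a c hf => by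
    have hc : AnalyticAt ℝ (fun t : ℝ => c * t) 0 := analyticAt_const.mul analyticAt_id
    exact (analyticAt_const.mul (hf.comp_of_eq hc (by simp))).contDiffAt
  have h := Filter.EventuallyEq.iteratedDeriv_eq n hfun
  rw [iteratedDeriv_fun_add (hscale _ _ hK) (hscale _ _ hG), iteratedDeriv_const_mul_field,
    iteratedDeriv_const_mul_field, iteratedDeriv_comp_const_mul_real,
    iteratedDeriv_comp_const_mul_real] at h
  simp only [mul_zero] at h
  obtain ⟨m, rfl⟩ : ∃ m, n = m + 1 := ⟨n - 1, by omega⟩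
  have hd1 : (1 : ℝ) < d := by exact_mod_cast hd
  have hdm : (1 : ℝ) < (d : ℝ) ^ m := one_lt_pow₀ hd1 (by omega)
  have hdm' : (d : ℝ) ^ m - 1 ≠ 0 := by linarith
  have hd0 : (d : ℝ) ≠ 0 := by linarith
  have hd0' : (d : ℝ) + 1 ≠ 0 := by linarith
  rw [Nat.add_sub_cancel, eq_div_iff (by positivity)]
  rw [inv_pow, inv_pow, pow_succ, pow_succ] at h
  field_simp at h
  linear_combination h

/-- Cumulant relation between the a.s. limit `H` of the spherical averages
of the free height field and a single increment: `κ₁ᵀ = 0` and, for `n ≥ 2`,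
`κ_nᵀ = κ_n · d^{n-1} / ((d^{n-1} - 1)(d+1)^{n-1})`. The `n`-th cumulant is the `n`-th
derivative at `0` of the logarithm of the moment generating function. -/
theorem free_limit_cumulants
    {Ω : Type} [MeasurableSpace Ω] (P : Measure Ω) [IsProbabilityMeasure P]
    (d : ℕ) (hd : 2 ≤ d)
    (p : ℤ → ℝ) (hp0 : ∀ j, 0 ≤ p j) (hpsum : Summable p) (hp1 : ∑' j, p j = 1)
    (hsymm : ∀ j, p (-j) = p j)
    (R : ℝ) (hR : 0 < R)
    (hψ : ∀ s : ℝ, |s| < R → Summable (fun j : ℤ => Real.exp (s * j) * p j))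
    (Y : Vertex d → Ω → ℤ) (hmeas : ∀ v, Measurable (Y v))
    (hindep : iIndepFun Y P)
    (hlaw : ∀ v (j : ℤ), P {ω | Y v ω = j} = ENNReal.ofReal (p j))
    (H : Ω → ℝ) (hHmeas : Measurable H)
    (hH : ∀ᵐ ω ∂P, Tendsto (fun r => sphAvg d (fun v ω => (Y v ω : ℝ)) r ω) atTop (𝓝 (H ω))) :
    iteratedDeriv 1 (fun t : ℝ => Real.log (∫ ω, Real.exp (t * H ω) ∂P)) 0 = 0 ∧
    ∀ n : ℕ, 2 ≤ n →
      iteratedDeriv n (fun t : ℝ => Real.log (∫ ω, Real.exp (t * H ω) ∂P)) 0 =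
        iteratedDeriv n (fun s : ℝ => Real.log (∑' j : ℤ, Real.exp (s * j) * p j)) 0 *
          (d : ℝ) ^ (n - 1) / (((d : ℝ) ^ (n - 1) - 1) * ((d : ℝ) + 1) ^ (n - 1)) := by
  have hd0 : 0 < d := by omega
  set ψ : ℝ → ℝ := fun s => ∑' j : ℤ, Real.exp (s * j) * p j with hψdef
  set X : Vertex d → Ω → ℝ := fun v ω => (Y v ω : ℝ)
  have hXmeas : ∀ v, Measurable (X v) := fun v => measurable_from_top.comp (hmeas v)
  have hXindep : iIndepFun X P :=
    hindep.comp (fun _ (j : ℤ) => (j : ℝ)) fun _ => measurable_from_top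
  have hψX : ∀ v s, |s| < R →
      Integrable (fun ω => Real.exp (s * X v ω)) P ∧ mgf (X v) P s = ψ s := fun v s hs =>
    integrable_exp_and_mgf_eq_tsum hp0 (hmeas v) (hlaw v) (hψ s hs)
  have hψeven : ∀ s, ψ (-s) = ψ s := tsum_exp_neg_mul hsymm
  have hψ0 : ∀ s, 0 ≤ ψ s := fun s =>
    tsum_nonneg fun j => mul_nonneg (Real.exp_nonneg _) (hp0 j)
  have hψpos : ∀ s, |s| < R → 0 < ψ s := fun s hs => by
    have h := hψX (0, []) s hs
    rw [← h.2]
    exact mgf_pos h.1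
  have hball : ∀ {ε : ℝ}, 0 < ε → ∀ᶠ s : ℝ in 𝓝 0, |s| < ε := fun {ε} hε => by
    filter_upwards [Metric.ball_mem_nhds (0 : ℝ) hε] with s hs
    simpa using hs
  have hK : AnalyticAt ℝ (fun s => Real.log (ψ s)) 0 := by
    have hint : (0 : ℝ) ∈ interior (integrableExpSet (X (0, [])) P) := by
      rw [mem_interior_iff_mem_nhds]
      filter_upwards [hball hR] with s hs using (hψX _ s hs).1
    refine (analyticAt_cgf hint).congr ?_
    filter_upwards [hball hR] with s hs
    rw [cgf, (hψX _ s hs).2]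
  have hKderiv : deriv (fun s => Real.log (ψ s)) 0 = 0 :=
    deriv_zero_of_even fun s => by rw [hψeven]
  obtain ⟨C, hC, δ, hδ, hKle⟩ := hK.exists_le_mul_sq (by simp [hψdef, hp1]) hKderiv
  have hψle : ∀ s, |s| < min R δ → ψ s ≤ Real.exp (C * s ^ 2) := fun s hs =>
    (Real.log_le_iff_le_exp (hψpos s (hs.trans_le (min_le_left _ _)))).1
      (hKle s (hs.trans_le (min_le_right _ _)))
  set ε : ℝ := min R δ / 2 with hε
  have hεpos : 0 < ε := half_pos (lt_min hR hδ)
  have hεR : ε < R := (half_lt_self (lt_min hR hδ)).trans_le (min_le_left _ _)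
  have hconv : ∀ t, |t| < ε → Integrable (fun ω => Real.exp (t * H ω)) P ∧
      Tendsto (fun r => sphereMgf d ψ r t) atTop (𝓝 (mgf H P t)) := fun t ht => by
    have h2t : |2 * t| < min R δ := by
      rw [abs_mul, abs_two]
      linarith
    have havg := fun r => integrable_exp_sphAvg_and_mgf_eq hd0 hXmeas hXindep hψX r (ht.trans hεR)
    have havg2 := fun r => integrable_exp_sphAvg_and_mgf_eq hd0 hXmeas hXindep hψX r
      (h2t.trans_le (min_le_left _ _))
    have hsq : ∀ x : ℝ, Real.exp (t * x) ^ 2 = Real.exp (2 * t * x) := fun x => by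
      rw [← Real.exp_nat_mul]
      push_cast
      ring_nf
    have h := tendsto_integral_of_sq_bounded (P := P)
      (Z := fun r ω => Real.exp (t * sphAvg d X (r + 1) ω)) (W := fun ω => Real.exp (t * H ω))
      (C := Real.exp (2 * C * (2 * t) ^ 2))
      (fun r ω => Real.exp_nonneg _) (fun r => (havg r).1)
      (fun r => by simpa only [hsq] using (havg2 r).1)
      (fun r => by
        simp only [hsq]
        exact (havg2 r).2.trans_le (sphereMgf_le hd hC hψ0 hψle r h2t))
      (by
        filter_upwards [hH] with ω hω
        exact (Real.continuous_exp.tendsto _).comp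
          (((tendsto_add_atTop_iff_nat 1).2 hω).const_mul t))
    exact ⟨h.1, h.2.congr fun r => (havg r).2⟩
  have hGpos : ∀ t, |t| < ε → 0 < mgf H P t := fun t ht => mgf_pos (hconv t ht).1
  have hG : AnalyticAt ℝ (cgf H P) 0 := by
    refine analyticAt_cgf ?_
    rw [mem_interior_iff_mem_nhds]
    filter_upwards [hball hεpos] with t ht using (hconv t ht).1
  have hGeven : ∀ t, |t| < ε → cgf H P (-t) = cgf H P t := fun t ht => by
    have h := (hconv (-t) (by rwa [abs_neg])).2
    simp only [sphereMgf_even hψeven] at h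
    rw [cgf, cgf, tendsto_nhds_unique h (hconv t ht).2]
  have hinv : ∀ {a : ℝ} (t : ℝ), 1 ≤ a → |a⁻¹ * t| ≤ |t| := fun {a} t ha => by
    rw [abs_mul, abs_of_nonneg (inv_nonneg.2 (zero_le_one.trans ha))]
    exact mul_le_of_le_one_left (abs_nonneg t) (inv_le_one_of_one_le₀ ha)
  have hd1 : (1 : ℝ) ≤ d := by exact_mod_cast hd0
  have hfun : ∀ᶠ t in 𝓝 0, cgf H P t =
      ((d : ℝ) + 1) * Real.log (ψ (((d : ℝ) + 1)⁻¹ * t)) + d * cgf H P ((d : ℝ)⁻¹ * t) := by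
    filter_upwards [hball hεpos] with t ht
    have htd : |(d : ℝ)⁻¹ * t| < ε := (hinv t hd1).trans_lt ht
    have htd' : |((d : ℝ) + 1)⁻¹ * t| < R :=
      (hinv t (by linarith)).trans_lt (ht.trans hεR)
    have h1 := ((tendsto_add_atTop_iff_nat 1).2 (hconv t ht).2)
    simp only [sphereMgf_succ] at h1
    have h2 := tendsto_nhds_unique h1 (((hconv _ htd).2.pow d).const_mul _)
    rw [cgf, h2, Real.log_mul (pow_pos (hψpos _ htd') _).ne' (pow_pos (hGpos _ htd) _).ne',
      Real.log_pow, Real.log_pow, cgf]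
    push_cast
    rfl
  refine ⟨?_, fun n hn => iteratedDeriv_eq_of_functional_equation hd hG hK hfun hn⟩
  have h1 : (fun t => cgf H P (-t)) =ᶠ[𝓝 0] cgf H P := by
    filter_upwards [hball hεpos] with t ht using hGeven t ht
  have h2 := h1.deriv_eq
  rw [deriv_comp_neg, neg_zero] at h2
  rw [iteratedDeriv_one]
  change deriv (cgf H P) 0 = 0
  linarith
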